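/- For all positive integers r and s and every nonnegative integer n with 3-adic expansion n = n_0 + 3 n_1 + 3^2 n_2 + \cdots + 3^m n_m (0 \le n_i \le 2), one has, modulo 9: a_n(r,s) \equiv \prod_{i=0}^{m} a_{n_i}(r,s) + 3 \sum_{\nu=1}^{m} (\prod_{0 \le i \le m, i \ne \nu-1, \nu} a_{n_i}(r,s)) \cdot f(n_{\nu-1}, n_\nu; r, s), where f(x, y; r, s) = x(x+1) y ( s(y+1) + (-1)^s ( s(y-1) + r y ) ) + \chi(r=1)(x+2)(x+1) y + \chi(s=1)((-1)^r - 1)(x-1) x y^2, all computed in the integers. -/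

import Mathlib

open Finset

/-- The generalised Apéry numbers `a_n(r,s) = ∑_{k=0}^n C(n,k)^r C(n+k,k)^s`. -/
def apery (r s n : ℕ) : ℕ :=
  ∑ k ∈ Finset.range (n + 1), n.choose k ^ r * (n + k).choose k ^ s

/-- `χ(P)`: the indicator of the statement `P`. -/
def chi (P : Prop) [Decidable P] : ℤ := if P then 1 else 0

/-- The correction term `f(x, y; r, s)` from Theorem 1. -/
def apf (r s : ℕ) (x y : ℤ) : ℤ :=
  x * (x + 1) * y * ((s : ℤ) * (y + 1) + (-1) ^ s * ((s : ℤ) * (y - 1) + (r : ℤ) * y))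
  + chi (r = 1) * (x + 2) * (x + 1) * y
  + chi (s = 1) * ((-1) ^ r - 1) * (x - 1) * x * y ^ 2

theorem nine_eq_zero : (9 : ZMod 9) = 0 := by decide

theorem choose_three_mul (N : ℕ) : ∀ K : ℕ,
    (((3 * N).choose (3 * K) : ℕ) : ZMod 9) = (N.choose K : ℕ) ∧
    (((3 * N).choose (3 * K + 1) : ℕ) : ZMod 9) = 3 * ((N : ZMod 9) - K) * (N.choose K : ℕ) ∧
    (((3 * N).choose (3 * K + 2) : ℕ) : ZMod 9) = 3 * ((N : ZMod 9) - K) * (N.choose K : ℕ) := by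
  have h9 := nine_eq_zero
  induction N with
  | zero =>
    rintro (_ | K)
    · simp
    · simp [Nat.choose_eq_zero_of_lt, mul_add]
  | succ N ih =>
    have p3 (j : ℕ) : (3 * (N + 1)).choose (j + 3) = (3 * N).choose (j + 3)
        + 3 * (3 * N).choose (j + 2) + 3 * (3 * N).choose (j + 1) + (3 * N).choose j := by
      simp only [mul_add, mul_one, Nat.choose_succ_succ']
      ring
    rintro (_ | K)
    · obtain ⟨-, h1, h2⟩ := ih 0
      have e1 : (3 * (N + 1)).choose 1 = 3 * N + 3 := by simp; ring
      have e2 : (3 * (N + 1)).choose 2 = (3 * N).choose 2 + 3 * (3 * N) + 3 := by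
        simp only [mul_add, mul_one, Nat.choose_succ_succ', Nat.choose_one_right,
          Nat.choose_zero_right]
        simp only [zero_add, Nat.choose_one_right]
        ring
      simp only [mul_zero, zero_add] at h1 h2 ⊢
      rw [e1, e2]
      push_cast
      rw [h2]
      refine ⟨by simp, by simp; ring, ?_⟩
      simp only [Nat.choose_zero_right]
      push_cast
      linear_combination (N : ZMod 9) * h9
    · obtain ⟨a0, a1, a2⟩ := ih K
      obtain ⟨b0, b1, b2⟩ := ih (K + 1)
      simp only [mul_add, mul_one] at b0 b1 b2
      have q0 := p3 (3 * K)
      have q1 := p3 (3 * K + 1)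
      have q2 := p3 (3 * K + 2)
      simp only [add_assoc, Nat.reduceAdd] at q0 q1 q2 b0 b1 b2
      rw [mul_add 3 K 1, mul_one, add_assoc, add_assoc, q0, q1, q2, Nat.choose_succ_succ' N K]
      push_cast at a0 a1 a2 b0 b1 b2 ⊢
      refine ⟨?_, ?_, ?_⟩
      · linear_combination b0 + 3 * a2 + 3 * a1 + a0
          + 2 * ((N : ZMod 9) - K) * (N.choose K : ZMod 9) * h9
      · linear_combination b1 + 3 * b0 + 3 * a2 + a1
          + ((N : ZMod 9) - K) * (N.choose K : ZMod 9) * h9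
      · linear_combination b2 + 3 * b1 + 3 * b0 + a2
          + ((N : ZMod 9) - K - 1) * (N.choose (K + 1) : ZMod 9) * h9

theorem cast_choose_succ_mul (N K : ℕ) :
    ((N.choose (K + 1) : ℕ) : ZMod 9) * (K + 1) = (N.choose K : ℕ) * ((N : ZMod 9) - K) := by
  rcases le_or_gt K N with h | h
  · have := congrArg (Nat.cast : ℕ → ZMod 9) (Nat.choose_succ_right_eq N K)
    push_cast [h] at this
    exact this
  · rw [Nat.choose_eq_zero_of_lt h, Nat.choose_eq_zero_of_lt (by omega)]
    simp

theorem choose_three_mul_add_one (N K : ℕ) :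
    (((3 * N + 1).choose (3 * K) : ℕ) : ZMod 9) = (1 + 3 * (K : ZMod 9)) * (N.choose K : ℕ) ∧
    (((3 * N + 1).choose (3 * K + 1) : ℕ) : ZMod 9)
      = (1 + 3 * ((N : ZMod 9) - K)) * (N.choose K : ℕ) ∧
    (((3 * N + 1).choose (3 * K + 2) : ℕ) : ZMod 9)
      = 6 * ((N : ZMod 9) - K) * (N.choose K : ℕ) := by
  obtain ⟨a0, a1, a2⟩ := choose_three_mul N K
  refine ⟨?_, ?_, ?_⟩
  · rcases K with _ | K
    · simp
    · have b2 := (choose_three_mul N K).2.2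
      have r := cast_choose_succ_mul N K
      simp only [mul_add, mul_one] at a0 ⊢
      rw [Nat.choose_succ_succ' (3 * N) (3 * K + 2)]
      push_cast
      linear_combination a0 + b2 - 3 * r
  · rw [Nat.choose_succ_succ']
    push_cast
    linear_combination a0 + a1
  · rw [Nat.choose_succ_succ']
    push_cast
    linear_combination a1 + a2

theorem choose_three_mul_add_two (N K : ℕ) :
    (((3 * N + 2).choose (3 * K) : ℕ) : ZMod 9) = (N.choose K : ℕ) ∧
    (((3 * N + 2).choose (3 * K + 1) : ℕ) : ZMod 9) = (2 + 3 * (N : ZMod 9)) * (N.choose K : ℕ) ∧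
    (((3 * N + 2).choose (3 * K + 2) : ℕ) : ZMod 9) = (N.choose K : ℕ) := by
  obtain ⟨a0, a1, a2⟩ := choose_three_mul_add_one N K
  have h9 := nine_eq_zero
  refine ⟨?_, ?_, ?_⟩
  · rcases K with _ | K
    · simp
    · have b2 := (choose_three_mul_add_one N K).2.2
      have r := cast_choose_succ_mul N K
      simp only [mul_add, mul_one] at a0 ⊢
      rw [Nat.choose_succ_succ' (3 * N + 1) (3 * K + 2)]
      push_cast at *
      linear_combination a0 + b2 - 6 * r + (N.choose (K + 1) : ZMod 9) * (K + 1) * h9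
  · rw [Nat.choose_succ_succ']
    push_cast
    linear_combination a0 + a1
  · rw [Nat.choose_succ_succ']
    push_cast
    linear_combination a1 + a2 + ((N : ZMod 9) - K) * (N.choose K : ZMod 9) * h9

theorem one_add_three_mul_pow (x : ZMod 9) (r : ℕ) : (1 + 3 * x) ^ r = 1 + 3 * r * x := by
  induction r with
  | zero => simp
  | succ r ih =>
    rw [pow_succ, ih]
    push_cast
    linear_combination r * x ^ 2 * nine_eq_zero

theorem three_mul_two_pow (s : ℕ) : (3 : ZMod 9) * 2 ^ s = 3 * (-1) ^ s := by
  induction s with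
  | zero => simp
  | succ s ih =>
    rw [pow_succ, pow_succ]
    linear_combination 2 * ih + (-1) ^ s * nine_eq_zero

theorem two_add_three_mul_pow (x : ZMod 9) (s : ℕ) :
    (2 + 3 * x) ^ s = 2 ^ s - 3 * s * (-1) ^ s * x := by
  induction s with
  | zero => simp
  | succ s ih =>
    rw [pow_succ, ih]
    push_cast
    linear_combination x * three_mul_two_pow s
      - (s * (-1) ^ s * x * (1 + x)) * nine_eq_zero

theorem three_mul_pow (x : ZMod 9) {s : ℕ} (hs : 0 < s) :
    (3 * x) ^ s = if s = 1 then 3 * x else 0 := by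
  split_ifs with h
  · simp [h]
  · obtain ⟨t, rfl⟩ : ∃ t, s = t + 2 := ⟨s - 2, by omega⟩
    linear_combination (3 * x) ^ t * x ^ 2 * nine_eq_zero

theorem sum_range_three_mul {M : Type*} [AddCommMonoid M] (g : ℕ → M) (N : ℕ) :
    ∑ k ∈ range (3 * N), g k
      = ∑ K ∈ range N, (g (3 * K) + g (3 * K + 1) + g (3 * K + 2)) := by
  induction N with
  | zero => simp
  | succ N ih =>
    rw [sum_range_succ _ N, ← ih, mul_add, mul_one, sum_range_succ, sum_range_succ,
      sum_range_succ]
    simp only [add_assoc]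


/-- The summand `C(n,k)^r C(n+k,k)^s` of the Apéry number, modulo 9. -/
def aperyTerm (r s n k : ℕ) : ZMod 9 :=
  (n.choose k : ZMod 9) ^ r * ((n + k).choose k : ZMod 9) ^ s

/-- The Apéry sum weighted by the summation index, modulo 9. -/
def aperyMoment (r s n : ℕ) : ZMod 9 :=
  ∑ k ∈ range (n + 1), (k : ZMod 9) * aperyTerm r s n k

theorem apery_cast (r s n : ℕ) :
    (apery r s n : ZMod 9) = ∑ k ∈ range (n + 1), aperyTerm r s n k := by
  simp [apery, aperyTerm]

theorem aperyTerm_of_lt {r s n k : ℕ} (hr : 0 < r) (h : n < k) : aperyTerm r s n k = 0 := by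
  simp [aperyTerm, Nat.choose_eq_zero_of_lt h, hr.ne']

theorem sum_aperyTerm_split {r s : ℕ} (hr : 0 < r) (c : ℕ → ZMod 9) (N i : ℕ) (hi : i ≤ 2) :
    ∑ k ∈ range (3 * N + i + 1), c k * aperyTerm r s (3 * N + i) k
      = ∑ K ∈ range (N + 1), (c (3 * K) * aperyTerm r s (3 * N + i) (3 * K)
        + c (3 * K + 1) * aperyTerm r s (3 * N + i) (3 * K + 1)
        + c (3 * K + 2) * aperyTerm r s (3 * N + i) (3 * K + 2)) := by
  rw [← sum_range_three_mul (fun k => c k * aperyTerm r s (3 * N + i) k)]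
  refine sum_subset (range_mono (by omega)) fun k _ hk => ?_
  rw [aperyTerm_of_lt hr (by simp only [mem_range] at hk; omega), mul_zero]

theorem choose_three_mul_succ (N K : ℕ) :
    (((3 * (N + K + 1)).choose (3 * K + 1) : ℕ) : ZMod 9)
      = 3 * ((N : ZMod 9) + K + 1) * ((N + K).choose K : ℕ) ∧
    (((3 * (N + K + 1)).choose (3 * K + 2) : ℕ) : ZMod 9)
      = 3 * ((N : ZMod 9) + K + 1) * ((N + K).choose K : ℕ) ∧
    (((3 * (N + K + 1) + 1).choose (3 * K + 2) : ℕ) : ZMod 9)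
      = 3 * (2 * ((N : ZMod 9) + K + 1)) * ((N + K).choose K : ℕ) := by
  obtain ⟨-, a1, a2⟩ := choose_three_mul (N + K + 1) K
  obtain ⟨-, -, b2⟩ := choose_three_mul_add_one (N + K + 1) K
  have h : (((N + K + 1).choose K : ℕ) : ZMod 9) * (N + 1)
      = ((N + K).choose K : ℕ) * (N + K + 1) := by
    have := congrArg (Nat.cast : ℕ → ZMod 9) (Nat.choose_mul_succ_eq (N + K) K)
    rw [show N + K + 1 - K = N + 1 by omega] at this
    push_cast at this
    exact this.symm
  push_cast at a1 a2 b2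
  refine ⟨?_, ?_, ?_⟩
  · linear_combination a1 + 3 * h
  · linear_combination a2 + 3 * h
  · linear_combination b2 + 6 * h

section Terms

variable (r s N K : ℕ)

theorem aperyTerm_zero_zero : aperyTerm r s (3 * N) (3 * K) = aperyTerm r s N K := by
  rw [aperyTerm, ← mul_add, (choose_three_mul N K).1, (choose_three_mul (N + K) K).1, aperyTerm]

theorem aperyTerm_zero_one (hr : 0 < r) : aperyTerm r s (3 * N) (3 * K + 1)
    = (if r = 1 then 3 * ((N : ZMod 9) - K) else 0) * aperyTerm r s N K := by
  rw [aperyTerm, show 3 * N + (3 * K + 1) = 3 * (N + K) + 1 by ring,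
    (choose_three_mul N K).2.1, (choose_three_mul_add_one (N + K) K).2.1, aperyTerm,
    mul_pow _ _ s, mul_pow _ _ r, three_mul_pow _ hr, one_add_three_mul_pow]
  split_ifs
  · push_cast
    linear_combination ((N : ZMod 9) - K) * (N.choose K : ZMod 9) ^ r
      * ((N + K).choose K : ZMod 9) ^ s * s * N * nine_eq_zero
  · ring

theorem aperyTerm_zero_two (hr : 0 < r) : aperyTerm r s (3 * N) (3 * K + 2)
    = (if r = 1 then 3 * ((N : ZMod 9) - K) else 0) * aperyTerm r s N K := by
  rw [aperyTerm, show 3 * N + (3 * K + 2) = 3 * (N + K) + 2 by ring,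
    (choose_three_mul N K).2.2, (choose_three_mul_add_two (N + K) K).2.2, aperyTerm,
    mul_pow _ (N.choose K : ZMod 9), three_mul_pow _ hr]
  ring

theorem aperyTerm_one_zero : aperyTerm r s (3 * N + 1) (3 * K)
    = (1 + 3 * (r + s) * (K : ZMod 9)) * aperyTerm r s N K := by
  rw [aperyTerm, show 3 * N + 1 + 3 * K = 3 * (N + K) + 1 by ring,
    (choose_three_mul_add_one N K).1, (choose_three_mul_add_one (N + K) K).1, aperyTerm,
    mul_pow, mul_pow, one_add_three_mul_pow, one_add_three_mul_pow]
  linear_combination (N.choose K : ZMod 9) ^ r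
      * ((N + K).choose K : ZMod 9) ^ s * s * r * K ^ 2 * nine_eq_zero

theorem aperyTerm_one_one : aperyTerm r s (3 * N + 1) (3 * K + 1)
    = (2 ^ s + 3 * (-1) ^ s * (r * ((N : ZMod 9) - K) - s * ((N : ZMod 9) + K)))
      * aperyTerm r s N K := by
  rw [aperyTerm, show 3 * N + 1 + (3 * K + 1) = 3 * (N + K) + 2 by ring,
    (choose_three_mul_add_one N K).2.1, (choose_three_mul_add_two (N + K) K).2.1, aperyTerm,
    mul_pow, mul_pow, one_add_three_mul_pow, two_add_three_mul_pow]
  push_cast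
  linear_combination (N.choose K : ZMod 9) ^ r * ((N + K).choose K : ZMod 9) ^ s
    * (r * ((N : ZMod 9) - K) * three_mul_two_pow s
      - s * (-1) ^ s * r * ((N : ZMod 9) - K) * (N + K) * nine_eq_zero)

theorem aperyTerm_one_two (hr : 0 < r) (hs : 0 < s) :
    aperyTerm r s (3 * N + 1) (3 * K + 2) = 0 := by
  rw [aperyTerm, show 3 * N + 1 + (3 * K + 2) = 3 * (N + K + 1) by ring,
    (choose_three_mul_add_one N K).2.2, (choose_three_mul_succ N K).2.1,
    mul_pow _ _ s, mul_pow _ _ r, three_mul_pow _ hs,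
    show (6 : ZMod 9) * (N - K) = 3 * (2 * (N - K)) by ring, three_mul_pow _ hr]
  split_ifs
  · linear_combination 2 * ((N : ZMod 9) - K) * (N.choose K : ZMod 9) ^ r * (N + K + 1)
      * ((N + K).choose K : ZMod 9) ^ s * nine_eq_zero
  all_goals ring

theorem aperyTerm_two_zero : aperyTerm r s (3 * N + 2) (3 * K) = aperyTerm r s N K := by
  rw [aperyTerm, show 3 * N + 2 + 3 * K = 3 * (N + K) + 2 by ring,
    (choose_three_mul_add_two N K).1, (choose_three_mul_add_two (N + K) K).1, aperyTerm]

theorem aperyTerm_two_one (hs : 0 < s) : aperyTerm r s (3 * N + 2) (3 * K + 1)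
    = (if s = 1 then 3 * (-1) ^ r * ((N : ZMod 9) + K + 1) else 0) * aperyTerm r s N K := by
  rw [aperyTerm, show 3 * N + 2 + (3 * K + 1) = 3 * (N + K + 1) by ring,
    (choose_three_mul_add_two N K).2.1, (choose_three_mul_succ N K).1, aperyTerm,
    mul_pow, mul_pow, three_mul_pow _ hs, two_add_three_mul_pow]
  split_ifs
  · linear_combination (N.choose K : ZMod 9) ^ r * ((N + K).choose K : ZMod 9) ^ s
      * ((N : ZMod 9) + K + 1)
      * (three_mul_two_pow r - r * (-1) ^ r * (N : ZMod 9) * nine_eq_zero)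
  · ring

theorem aperyTerm_two_two (hs : 0 < s) : aperyTerm r s (3 * N + 2) (3 * K + 2)
    = (if s = 1 then 6 * ((N : ZMod 9) + K + 1) else 0) * aperyTerm r s N K := by
  rw [aperyTerm, show 3 * N + 2 + (3 * K + 2) = 3 * (N + K + 1) + 1 by ring,
    (choose_three_mul_add_two N K).2.2, (choose_three_mul_succ N K).2.2, aperyTerm,
    mul_pow, three_mul_pow _ hs]
  split_ifs <;> ring

end Terms

theorem apery_three_mul_add {r s : ℕ} (hr : 0 < r) (N i : ℕ) (hi : i ≤ 2) :
    (apery r s (3 * N + i) : ZMod 9) = ∑ K ∈ range (N + 1), (aperyTerm r s (3 * N + i) (3 * K)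
        + aperyTerm r s (3 * N + i) (3 * K + 1) + aperyTerm r s (3 * N + i) (3 * K + 2)) := by
  simpa [apery_cast] using sum_aperyTerm_split (s := s) hr (fun _ => 1) N i hi

theorem apery_three_mul {r s : ℕ} (hr : 0 < r) (N : ℕ) : (apery r s (3 * N) : ZMod 9)
    = (1 + 6 * (if r = 1 then 1 else 0) * N) * apery r s N
      - 6 * (if r = 1 then 1 else 0) * aperyMoment r s N := by
  rw [← add_zero (3 * N), apery_three_mul_add hr N 0 (by norm_num), apery_cast, aperyMoment,
    mul_sum, mul_sum, ← sum_sub_distrib]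
  refine sum_congr rfl fun K _ => ?_
  rw [add_zero, aperyTerm_zero_zero, aperyTerm_zero_one _ _ _ _ hr, aperyTerm_zero_two _ _ _ _ hr]
  split_ifs <;> ring

theorem apery_three_mul_add_one {r s : ℕ} (hr : 0 < r) (hs : 0 < s) (N : ℕ) :
    (apery r s (3 * N + 1) : ZMod 9)
    = (1 + 2 ^ s + 3 * (-1) ^ s * (r - s) * N) * apery r s N
      + 3 * (r + s) * (1 - (-1) ^ s) * aperyMoment r s N := by
  rw [apery_three_mul_add hr N 1 (by norm_num), apery_cast, aperyMoment,
    mul_sum, mul_sum, ← sum_add_distrib]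
  refine sum_congr rfl fun K _ => ?_
  rw [aperyTerm_one_zero, aperyTerm_one_one, aperyTerm_one_two _ _ _ _ hr hs]
  ring

theorem apery_three_mul_add_two {r s : ℕ} (hr : 0 < r) (hs : 0 < s) (N : ℕ) :
    (apery r s (3 * N + 2) : ZMod 9)
    = (1 + 3 * (if s = 1 then 1 else 0) * ((-1) ^ r - 1) * (N + 1)) * apery r s N
      + 3 * (if s = 1 then 1 else 0) * ((-1) ^ r - 1) * aperyMoment r s N := by
  rw [apery_three_mul_add hr N 2 (by norm_num), apery_cast, aperyMoment,
    mul_sum, mul_sum, ← sum_add_distrib]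
  refine sum_congr rfl fun K _ => ?_
  rw [aperyTerm_two_zero, aperyTerm_two_one _ _ _ _ hs, aperyTerm_two_two _ _ _ _ hs]
  split_ifs
  · linear_combination (N + K + 1) * aperyTerm r s N K * nine_eq_zero
  · ring

theorem aperyMoment_zero (r s : ℕ) : aperyMoment r s 0 = 0 := by simp [aperyMoment]

theorem apery_zero (r s : ℕ) : apery r s 0 = 1 := by simp [apery]

theorem apery_one_cast {r s : ℕ} (hr : 0 < r) (hs : 0 < s) :
    (apery r s 1 : ZMod 9) = 1 + 2 ^ s := by
  simpa [aperyMoment_zero, apery_zero] using apery_three_mul_add_one hr hs 0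

theorem apery_two_cast {r s : ℕ} (hr : 0 < r) (hs : 0 < s) :
    (apery r s 2 : ZMod 9) = 1 + 3 * (if s = 1 then 1 else 0) * ((-1) ^ r - 1) := by
  simpa [aperyMoment_zero, apery_zero] using apery_three_mul_add_two hr hs 0

theorem three_mul_apery {r s : ℕ} (hr : 0 < r) (hs : 0 < s) (N i : ℕ) (hi : i ≤ 2) :
    3 * (apery r s (3 * N + i) : ZMod 9) = 3 * (apery r s i * apery r s N) := by
  interval_cases i
  · rw [add_zero, apery_three_mul hr, apery_zero]
    push_cast
    linear_combination (2 * (if r = 1 then 1 else 0) * (N * apery r s N - aperyMoment r s N)) *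
      nine_eq_zero
  · rw [apery_three_mul_add_one hr hs, apery_one_cast hr hs]
    linear_combination ((-1) ^ s * ((r : ZMod 9) - s) * N * apery r s N
      + (r + s) * (1 - (-1) ^ s) * aperyMoment r s N) * nine_eq_zero
  · rw [apery_three_mul_add_two hr hs, apery_two_cast hr hs]
    linear_combination (if s = 1 then 1 else 0) * ((-1) ^ r - 1)
      * (N * apery r s N + aperyMoment r s N) * nine_eq_zero

theorem three_mul_aperyMoment {r s : ℕ} (hr : 0 < r) (hs : 0 < s) (N i : ℕ) (hi : i ≤ 2) :
    3 * aperyMoment r s (3 * N + i)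
      = if i = 1 then 3 * (-1) ^ s * (apery r s N : ZMod 9) else 0 := by
  rw [aperyMoment, sum_aperyTerm_split hr _ N i hi, mul_sum]
  interval_cases i
  · refine sum_eq_zero fun K _ => ?_
    rw [add_zero, aperyTerm_zero_zero, aperyTerm_zero_one _ _ _ _ hr,
      aperyTerm_zero_two _ _ _ _ hr]
    push_cast
    split_ifs
    · linear_combination (K + (3 * K + 1) * ((N : ZMod 9) - K) + (3 * K + 2) * ((N : ZMod 9) - K))
        * aperyTerm r s N K * nine_eq_zero
    · linear_combination K * aperyTerm r s N K * nine_eq_zero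
  · rw [if_pos rfl, apery_cast, mul_sum]
    refine sum_congr rfl fun K _ => ?_
    rw [aperyTerm_one_zero, aperyTerm_one_one, aperyTerm_one_two _ _ _ _ hr hs]
    push_cast
    linear_combination aperyTerm r s N K * three_mul_two_pow s
      + (K * (1 + 3 * (r + s) * (K : ZMod 9)) + K * 2 ^ s + (3 * K + 1) * (-1) ^ s
        * (r * ((N : ZMod 9) - K) - s * ((N : ZMod 9) + K)))
        * aperyTerm r s N K * nine_eq_zero
  · refine sum_eq_zero fun K _ => ?_
    rw [aperyTerm_two_zero, aperyTerm_two_one _ _ _ _ hs, aperyTerm_two_two _ _ _ _ hs]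
    push_cast
    split_ifs
    · linear_combination (K + (3 * K + 1) * (-1) ^ r * ((N : ZMod 9) + K + 1)
        + 2 * (3 * K + 2) * ((N : ZMod 9) + K + 1)) * aperyTerm r s N K * nine_eq_zero
    · linear_combination K * aperyTerm r s N K * nine_eq_zero

theorem apf_cast (r s : ℕ) (x y : ℤ) : ((apf r s x y : ℤ) : ZMod 9)
    = x * (x + 1) * y * (s * (y + 1) + (-1) ^ s * (s * (y - 1) + r * y))
      + (if r = 1 then 1 else 0) * (x + 2) * (x + 1) * y
      + (if s = 1 then 1 else 0) * ((-1) ^ r - 1) * (x - 1) * x * y ^ 2 := by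
  simp [apf, chi]

theorem apery_two_digits {r s : ℕ} (hr : 0 < r) (hs : 0 < s) (N i j : ℕ)
    (hi : i ≤ 2) (hj : j ≤ 2) :
    (apery r s (3 * (3 * N + j) + i) : ZMod 9)
      = apery r s i * apery r s (3 * N + j) + 3 * (apf r s i j : ℤ) * apery r s N := by
  have ha : 3 * (apery r s (3 * N + j) : ZMod 9)
      = 3 * (1 + if j = 1 then (-1) ^ s else 0) * apery r s N := by
    rw [three_mul_apery hr hs N j hj]
    interval_cases j
    · simp [apery_zero]
    · rw [apery_one_cast hr hs, if_pos rfl]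
      linear_combination apery r s N * three_mul_two_pow s
    · rw [apery_two_cast hr hs, if_neg (by norm_num : 2 ≠ 1)]
      linear_combination (if s = 1 then 1 else 0) * ((-1) ^ r - 1) * apery r s N * nine_eq_zero
  have hm := three_mul_aperyMoment hr hs N j hj
  have he : ((-1 : ZMod 9) ^ s) ^ 2 = 1 := by rw [← pow_mul, mul_comm, pow_mul]; simp
  have hc : (if s = 1 then 1 else 0 : ZMod 9) * (-1) ^ s = -(if s = 1 then 1 else 0) := by
    split_ifs with h <;> simp [h]
  rw [apf_cast]
  have h0 := apery_three_mul hr (s := s) (3 * N + j)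
  have h1 := apery_three_mul_add_one hr hs (3 * N + j)
  have h2 := apery_three_mul_add_two hr hs (3 * N + j)
  generalize (apery r s (3 * N + j) : ZMod 9) = A at *
  generalize aperyMoment r s (3 * N + j) = M at *
  generalize (apery r s N : ZMod 9) = a at *
  interval_cases i
  · rw [add_zero, h0, apery_zero]
    generalize (if r = 1 then 1 else 0 : ZMod 9) = χ at *
    clear h0 h1 h2 hc
    interval_cases j <;> norm_num at ha hm ⊢
    · linear_combination 2 * χ * N * A * nine_eq_zero - 2 * χ * hm
    · linear_combination (norm := (ring_nf; reduce_mod_char)) 2 * χ * ha - 2 * χ * hm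
    · linear_combination (norm := (ring_nf; reduce_mod_char)) 4 * χ * ha - 2 * χ * hm
  · rw [h1, apery_one_cast hr hs]
    generalize (if r = 1 then 1 else 0 : ZMod 9) = χ at *
    clear h0 h1 h2 hc
    generalize (-1 : ZMod 9) ^ s = ε at *
    interval_cases j <;> norm_num at ha hm ⊢
    · linear_combination (norm := (ring_nf; reduce_mod_char)) (r + s) * (1 - ε) * hm
    · linear_combination (norm := (ring_nf; reduce_mod_char))
        ε * (r - s) * ha + (r + s) * (1 - ε) * hm - 6 * s * a * he
    · linear_combination (norm := (ring_nf; reduce_mod_char))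
        2 * ε * (r - s) * ha + (r + s) * (1 - ε) * hm
  · rw [h2, apery_two_cast hr hs]
    generalize (if r = 1 then 1 else 0 : ZMod 9) = χ at *
    generalize (if s = 1 then 1 else 0 : ZMod 9) = ψ at *
    clear h0 h1 h2
    generalize (-1 : ZMod 9) ^ s = ε at *
    generalize (-1 : ZMod 9) ^ r = ρ at *
    interval_cases j <;> norm_num at ha hm ⊢
    · linear_combination (norm := (ring_nf; reduce_mod_char)) ψ * (ρ - 1) * hm
    · linear_combination (norm := (ring_nf; reduce_mod_char))
        ψ * (ρ - 1) * (ha + hm) + 6 * (ρ - 1) * a * hc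
    · linear_combination (norm := (ring_nf; reduce_mod_char)) ψ * (ρ - 1) * (2 * ha + hm)

theorem sum_range_digits (m : ℕ) (d : ℕ → ℕ) :
    ∑ i ∈ range (m + 1), d i * 3 ^ i = 3 * ∑ i ∈ range m, d (i + 1) * 3 ^ i + d 0 := by
  rw [sum_range_succ', mul_sum, pow_zero, mul_one]
  congr 1
  exact sum_congr rfl fun i _ => by ring

theorem apery_sum_mod_three {r s : ℕ} (hr : 0 < r) (hs : 0 < s) (m : ℕ) :
    ∀ d : ℕ → ℕ, (∀ i, d i ≤ 2) →
    3 * (apery r s (∑ i ∈ range m, d i * 3 ^ i) : ZMod 9)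
      = 3 * ∏ i ∈ range m, (apery r s (d i) : ZMod 9) := by
  induction m with
  | zero => simp [apery_zero]
  | succ m ih =>
    intro d hd
    have h := ih (fun i => d (i + 1)) fun i => hd _
    rw [sum_range_digits, three_mul_apery hr hs _ _ (hd 0), prod_range_succ']
    linear_combination (apery r s (d 0) : ZMod 9) * h

theorem apery_sum_mod_nine {r s : ℕ} (hr : 0 < r) (hs : 0 < s) (m : ℕ) :
    ∀ d : ℕ → ℕ, (∀ i, d i ≤ 2) →
    (apery r s (∑ i ∈ range (m + 1), d i * 3 ^ i) : ZMod 9)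
      = (∏ i ∈ range (m + 1), (apery r s (d i) : ZMod 9))
        + 3 * ∑ j ∈ range m, (∏ i ∈ range (m + 1),
          if i = j ∨ i = j + 1 then 1 else (apery r s (d i) : ZMod 9))
          * (apf r s (d j) (d (j + 1)) : ℤ) := by
  induction m with
  | zero => simp
  | succ m ih =>
    intro d hd
    have h := ih (fun i => d (i + 1)) fun i => hd _
    have h3 := apery_sum_mod_three hr hs m (fun i => d (i + 2)) fun i => hd _
    rw [sum_range_digits, sum_range_digits m fun i => d (i + 1),
      apery_two_digits hr hs _ _ _ (hd 0) (hd _), ← sum_range_digits m fun i => d (i + 1), h,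
      prod_range_succ' _ (m + 1), sum_range_succ' _ m]
    simp only [prod_range_succ' _ (m + 1)]
    have e1 : ∏ i ∈ range (m + 1), (if i + 1 = 0 ∨ i + 1 = 0 + 1 then 1
        else (apery r s (d (i + 1)) : ZMod 9)) = ∏ i ∈ range m, (apery r s (d (i + 2)) : ZMod 9) := by
      rw [prod_range_succ']
      simp
    have e2 (j : ℕ) : (if 0 = j + 1 ∨ 0 = j + 1 + 1 then 1
        else (apery r s (d 0) : ZMod 9)) = apery r s (d 0) := if_neg (by omega)
    rw [e1]
    simp only [add_left_inj, e2, true_or, if_true, mul_one,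
      mul_right_comm _ (apery r s (d 0) : ZMod 9), ← sum_mul]
    linear_combination (apf r s (d 0) (d (0 + 1)) : ZMod 9) * h3

/-- The mod-9 factorisation theorem for the generalised Apéry numbers, `s ≥ 1`. -/
theorem apery_mod_nine (r s : ℕ) (hr : 0 < r) (hs : 0 < s)
    (n m : ℕ) (d : ℕ → ℕ) (hd2 : ∀ i, d i ≤ 2)
    (hn : n = ∑ i ∈ Finset.range (m + 1), d i * 3 ^ i) :
    (apery r s n : ℤ) ≡
      (∏ i ∈ Finset.range (m + 1), (apery r s (d i) : ℤ))
      + 3 * ∑ ν ∈ Finset.Icc 1 m,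
          (∏ i ∈ ((Finset.range (m + 1)).erase (ν - 1)).erase ν,
            (apery r s (d i) : ℤ)) * apf r s (d (ν - 1)) (d ν)
      [ZMOD 9] := by
  refine (ZMod.intCast_eq_intCast_iff _ _ 9).1 ?_
  push_cast
  rw [hn, apery_sum_mod_nine hr hs m d hd2, ← Ico_add_one_right_eq_Icc, sum_Ico_eq_sum_range]
  simp only [add_tsub_cancel_right, add_comm 1]
  congr 2
  refine sum_congr rfl fun j _ => ?_
  congr 1
  rw [prod_ite, prod_const_one, one_mul]
  refine prod_congr ?_ fun _ _ => rfl
  ext i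
  simp only [mem_filter, mem_erase]
  tauto
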